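/- Let X be a Banach space and let A be a nonempty bounded subset of X. If A is uniquely remotal and M-compact, and the derived set A' of A is compact, then A is a singleton. -/

import Mathlib

open Filter Topology

/-- The farthest distance of `x` from the set `A`: `D(x,A) = sup_{a ∈ A} ‖x - a‖`. -/
noncomputable def farDist {X : Type*} [NormedAddCommGroup X] (x : X) (A : Set X) : ℝ :=
  sSup ((fun a => ‖x - a‖) '' A)

/-- `F(x,A) = {a ∈ A : ‖x - a‖ = D(x,A)}`, the farthest points of `A` from `x`. -/
def farPoints {X : Type*} [NormedAddCommGroup X] (x : X) (A : Set X) : Set X :=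
  {a ∈ A | ‖x - a‖ = farDist x A}

/-- `A` is remotal if `F(x,A)` is nonempty for every `x`. -/
def Remotal {X : Type*} [NormedAddCommGroup X] (A : Set X) : Prop :=
  ∀ x : X, (farPoints x A).Nonempty

/-- `A` is uniquely remotal if `F(x,A)` is a singleton for every `x`. -/
def UniquelyRemotal {X : Type*} [NormedAddCommGroup X] (A : Set X) : Prop :=
  ∀ x : X, ∃ a : X, farPoints x A = {a}

/-- A sequence in `S` is maximizing if `‖x - a n‖ → D(x,S)` for some `x ∈ X`. -/
def MaximizingSeq {X : Type*} [NormedAddCommGroup X] (S : Set X) (a : ℕ → X) : Prop :=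
  (∀ n, a n ∈ S) ∧ ∃ x : X, Tendsto (fun n => ‖x - a n‖) atTop (𝓝 (farDist x S))

/-- `S` is M-compact if every maximizing sequence in `S` has a subsequence converging in `X`. -/
def MCompact {X : Type*} [NormedAddCommGroup X] (S : Set X) : Prop :=
  ∀ a : ℕ → X, MaximizingSeq S a →
    ∃ (φ : ℕ → ℕ) (l : X), StrictMono φ ∧ Tendsto (a ∘ φ) atTop (𝓝 l)

/-- `Far(A) = {a ∈ A : a ∈ F(x,A) for some x ∈ X}`. -/
def farSet {X : Type*} [NormedAddCommGroup X] (A : Set X) : Set X :=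
  {a : X | ∃ x : X, a ∈ farPoints x A}

-- We use Mathlib's `derivedSet A = {x | AccPt x (𝓟 A)}` for the set of limit points.

section Scarf

variable {V I L : Type*} [LinearOrder L]

/-- A finite set `σ` is dominant for a family of rankings `r i` if no point is ranked
strictly above the lowest point of `σ` by all the rankings simultaneously. -/
def IsDominant (r : I → V → L) (σ : Finset V) : Prop :=
  ∀ y, ∃ i, ∀ x ∈ σ, r i y ≤ r i x

theorem IsDominant.mono {r : I → V → L} {σ τ : Finset V} (h : IsDominant r σ) (hτ : τ ⊆ σ) :
    IsDominant r τ := fun y =>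
  let ⟨i, hi⟩ := h y
  ⟨i, fun x hx => hi x (hτ hx)⟩

/-- The points ranked above `m l` by every ranking `l ≠ k`. -/
def aboveExcept (r : I → V → L) (m : I → V) (k : I) : Set V :=
  {y | ∀ l, l ≠ k → r l (m l) < r l y}

/-- The points of `aboveExcept r m k` ranked highest by `k`. -/
def topAboveExcept (r : I → V → L) (m : I → V) (k : I) : Set V :=
  {x ∈ aboveExcept r m k | ∀ y ∈ aboveExcept r m k, r k y ≤ r k x}

theorem surjOn_lowest {r : I → V → L} (hr : ∀ i, Function.Injective (r i)) {τ : Finset V}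
    (hτ : IsDominant r τ) {m : I → V} (hm : ∀ i, m i ∈ τ) (hmin : ∀ i, ∀ x ∈ τ, r i (m i) ≤ r i x)
    {x : V} (hx : x ∈ τ) : ∃ i, m i = x := by
  obtain ⟨i, hi⟩ := hτ x
  exact ⟨i, hr i (le_antisymm (hmin i x hx) (hi _ (hm i)))⟩

/-- The ways of enlarging a dominant set with `card I - 1` points to a dominant set with
`card I` points, in terms of the two rankings `i`, `j` having the same lowest point. -/
theorem dominant_insert_iff [DecidableEq V] [Fintype I] [DecidableEq I] {r : I → V → L}
    (hr : ∀ i, Function.Injective (r i)) {τ : Finset V}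
    (hτ : IsDominant r τ) (hcard : τ.card + 1 = Fintype.card I) {m : I → V} (hm : ∀ i, m i ∈ τ)
    (hmin : ∀ i, ∀ x ∈ τ, r i (m i) ≤ r i x) {i j : I} (hij : i ≠ j) (hmij : m i = m j) (x : V) :
    (x ∉ τ ∧ IsDominant r (insert x τ)) ↔ x ∈ topAboveExcept r m i ∨ x ∈ topAboveExcept r m j := by
  have back : ∀ i j, i ≠ j → m i = m j → x ∈ topAboveExcept r m i →
      (x ∉ τ ∧ IsDominant r (insert x τ)) := by
    intro i j hij hmij hx
    refine ⟨fun hxτ => ?_, fun y => ?_⟩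
    · obtain ⟨l, hl⟩ := surjOn_lowest hr hτ hm hmin hxτ
      by_cases hli : l = i
      · have := hx.1 j hij.symm
        rw [← hmij, ← hli, hl] at this
        exact lt_irrefl _ this
      · have := hx.1 l hli
        rw [hl] at this
        exact lt_irrefl _ this
    · by_cases hy : y ∈ aboveExcept r m i
      · have hyx := hx.2 y hy
        obtain ⟨l, hl⟩ := hτ x
        have hli : l = i := by
          by_contra hli
          exact absurd (hx.1 l hli) (not_lt.2 (hl _ (hm l)))
        subst hli
        refine ⟨l, fun z hz => ?_⟩
        rcases Finset.mem_insert.1 hz with rfl | hz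
        · exact hyx
        · exact hyx.trans (hl z hz)
      · simp only [aboveExcept, Set.mem_ofPred_eq, not_forall, not_lt] at hy
        obtain ⟨l, hl, hly⟩ := hy
        refine ⟨l, fun z hz => ?_⟩
        rcases Finset.mem_insert.1 hz with rfl | hz
        · exact hly.trans (hx.1 l hl).le
        · exact hly.trans (hmin l z hz)
  constructor
  · rintro ⟨hxτ, hdom⟩
    have hne : ∀ k, x ≠ m k := fun k h => hxτ (h ▸ hm k)
    obtain ⟨k, hk⟩ := hdom x
    have hkx : r k x < r k (m k) :=
      lt_of_le_of_ne (hk _ (Finset.mem_insert_of_mem (hm k))) fun h => hne k (hr k h)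
    -- every point of `τ` stays lowest for some ranking not placing `x` below its lowest point
    have hsurj : ∀ z ∈ τ, ∃ l, m l = z ∧ r l (m l) < r l x := by
      intro z hz
      obtain ⟨l, hl⟩ := hdom z
      have hlz : m l = z := hr l (le_antisymm (hmin l z hz)
        (hl _ (Finset.mem_insert_of_mem (hm l))))
      refine ⟨l, hlz, lt_of_le_of_ne ?_ fun h => hne l (hr l h.symm)⟩
      rw [hlz]
      exact hl x (Finset.mem_insert_self _ _)
    have hsub : τ ⊆ (Finset.univ.filter fun l => r l (m l) < r l x).image m := by
      intro z hz
      obtain ⟨l, hl, hl'⟩ := hsurj z hz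
      exact Finset.mem_image.2 ⟨l, by simpa using hl', hl⟩
    have hfilt : (Finset.univ.filter fun l => r l (m l) < r l x) = Finset.univ.erase k := by
      apply Finset.eq_of_subset_of_card_le
      · intro l hl
        have hl : r l (m l) < r l x := by simpa using hl
        refine Finset.mem_erase.2 ⟨?_, Finset.mem_univ _⟩
        rintro rfl
        exact lt_asymm hl hkx
      · rw [Finset.card_erase_of_mem (Finset.mem_univ _), Finset.card_univ]
        have h1 := Finset.card_le_card hsub
        have h2 := h1.trans Finset.card_image_le
        omega
    have hkabove : x ∈ aboveExcept r m k := fun l hl => by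
      have : l ∈ Finset.univ.filter fun l => r l (m l) < r l x := by
        rw [hfilt]; simp [hl]
      simpa using this
    have hktop : x ∈ topAboveExcept r m k := by
      refine ⟨hkabove, fun y hy => ?_⟩
      obtain ⟨l, hl⟩ := hdom y
      by_cases hlk : l = k
      · subst hlk
        exact hl x (Finset.mem_insert_self _ _)
      · exact absurd (hy l hlk) (not_lt.2 (hl _ (Finset.mem_insert_of_mem (hm l))))
    have hkij : k = i ∨ k = j := by
      by_contra! hcon
      have hinj : Set.InjOn m (Finset.univ.erase k : Finset I) := by
        apply Finset.injOn_of_card_image_eq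
        apply le_antisymm Finset.card_image_le
        rw [hfilt] at hsub
        refine le_trans ?_ (Finset.card_le_card hsub)
        rw [Finset.card_erase_of_mem (Finset.mem_univ _), Finset.card_univ]
        omega
      exact hij (hinj (by simp [hcon.1.symm]) (by simp [hcon.2.symm]) hmij)
    rcases hkij with rfl | rfl
    · exact Or.inl hktop
    · exact Or.inr hktop
  · rintro (hx | hx)
    · exact back i j hij hmij hx
    · exact back j i hij.symm hmij.symm hx

theorem topAboveExcept_eq_singleton [Finite V] {r : I → V → L}
    (hr : ∀ i, Function.Injective (r i)) {m : I → V}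
    {k : I} (h : (aboveExcept r m k).Nonempty) : ∃ x, topAboveExcept r m k = {x} := by
  obtain ⟨x, hx, hmax⟩ := Set.exists_max_image _ (r k) (Set.toFinite (aboveExcept r m k)) h
  refine ⟨x, Set.eq_singleton_iff_unique_mem.2 ⟨⟨hx, hmax⟩, fun y hy => ?_⟩⟩
  exact hr k (le_antisymm (hmax y hy.1) (hy.2 x hx))

open Classical in
/-- The number of dominant enlargements of a dominant set by one point is two unless the set
consists of slack points, in which case it is one. -/
theorem card_dominant_insert [Finite V] [DecidableEq V] [Fintype I] [DecidableEq I] [Nontrivial I]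
    {r : I → V → L} (hr : ∀ i, Function.Injective (r i))
    {s : I → V} (hs : ∀ i v, v ≠ s i → r i (s i) < r i v)
    (hs' : ∀ i k v, k ≠ i → v ∉ Set.range s → r k v < r k (s i)) (hV : ∃ v, v ∉ Set.range s)
    {τ : Finset V} (hτ : IsDominant r τ) (hcard : τ.card + 1 = Fintype.card I) :
    {x | x ∉ τ ∧ IsDominant r (insert x τ)}.ncard = if (τ : Set V) ⊆ Set.range s then 1 else 2 := by
  have hne : τ.Nonempty := by
    rw [← Finset.card_pos]
    have := Fintype.one_lt_card (α := I)
    omega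
  have hex : ∀ i, ∃ x ∈ τ, ∀ y ∈ τ, r i x ≤ r i y := fun i => Finset.exists_min_image τ (r i) hne
  choose m hm hmin using hex
  obtain ⟨i, -, j, -, hij, hmij⟩ := Finset.exists_ne_map_eq_of_card_lt_of_maps_to
    (s := Finset.univ) (t := τ) (f := m) (by rw [Finset.card_univ]; omega) (fun i _ => hm i)
  have hset : {x | x ∉ τ ∧ IsDominant r (insert x τ)} =
      topAboveExcept r m i ∪ topAboveExcept r m j := by
    ext x
    exact dominant_insert_iff hr hτ hcard hm hmin hij hmij x
  have hdisj : ∀ x, x ∈ topAboveExcept r m i → x ∉ topAboveExcept r m j := by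
    intro x hi hj
    obtain ⟨l, hl⟩ := hτ x
    have : r l (m l) < r l x := by
      by_cases h : l = i
      · exact hj.1 l (h ▸ hij)
      · exact hi.1 l h
    exact absurd this (not_lt.2 (hl _ (hm l)))
  rw [hset]
  split_ifs with hsl
  · -- `τ` consists of all slack points except one
    have hτs : ∀ l, s l ∈ τ → m l = s l := by
      intro l hl
      by_contra h
      exact absurd (hs l _ h) (not_lt.2 (hmin l _ hl))
    have hsinj : Function.Injective s := by
      intro a b hab
      by_contra hne
      obtain ⟨v, hv⟩ := hV
      have h1 := hs' b a v hne hv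
      have h2 := hs a v fun h => hv ⟨a, h.symm⟩
      rw [hab] at h2
      exact lt_asymm h1 h2
    have hone : ∀ a b, a ≠ b → s a ∉ τ → s b ∈ τ := by
      intro a b hab ha
      by_contra hb
      have hsub : τ ⊆ ((Finset.univ.erase a).erase b).image s := by
        intro v hv
        obtain ⟨l, rfl⟩ := hsl hv
        refine Finset.mem_image.2 ⟨l, ?_, rfl⟩
        simp only [Finset.mem_erase, Finset.mem_univ, and_true]
        exact ⟨fun h => hb (h ▸ hv), fun h => ha (h ▸ hv)⟩
      have h1 := (Finset.card_le_card hsub).trans Finset.card_image_le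
      rw [Finset.card_erase_of_mem (by simp [hab.symm]),
        Finset.card_erase_of_mem (Finset.mem_univ _), Finset.card_univ] at h1
      have := Fintype.one_lt_card (α := I)
      omega
    have key : ∀ i j, i ≠ j → m i = m j → s i ∉ τ →
        (topAboveExcept r m i ∪ topAboveExcept r m j).ncard = 1 := by
      intro i j hij hmij hi
      have hl : ∀ l, l ≠ i → m l = s l := fun l hl => hτs l (hone i l hl.symm hi)
      have h1 : (aboveExcept r m i).Nonempty := by
        obtain ⟨v, hv⟩ := hV
        refine ⟨v, fun l hli => ?_⟩
        rw [hl l hli]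
        exact hs l v fun h => hv ⟨l, h.symm⟩
      have h2 : topAboveExcept r m j = ∅ := by
        rw [Set.eq_empty_iff_forall_notMem]
        intro y hy
        have hyi := hy.1 i hij
        rw [hmij, hl j hij.symm] at hyi
        by_cases hys : y ∈ Set.range s
        · obtain ⟨a, rfl⟩ := hys
          by_cases hai : a = i
          · subst hai
            exact lt_asymm hyi (hs a _ (hsinj.ne hij.symm))
          by_cases haj : a = j
          · exact lt_irrefl _ (haj ▸ hyi)
          · have := hy.1 a haj
            rw [hl a hai] at this
            exact lt_irrefl _ this
        · exact lt_asymm hyi (hs' j i y hij hys)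
      obtain ⟨x, hx⟩ := topAboveExcept_eq_singleton hr h1
      rw [h2, hx, Set.union_empty, Set.ncard_singleton]
    by_cases hi : s i ∈ τ
    · have hj : s j ∉ τ := fun hj => hij (hsinj (by rw [← hτs i hi, ← hτs j hj, hmij]))
      rw [Set.union_comm]
      exact key j i hij.symm hmij.symm hj
    · exact key i j hij hmij hi
  · obtain ⟨v, hvτ, hv⟩ := Set.not_subset.1 hsl
    have key : ∀ i j, i ≠ j → m i = m j → (aboveExcept r m i).Nonempty := by
      intro i j hij hmij
      refine ⟨s i, fun l hl => lt_of_le_of_lt (hmin l v hvτ) (hs' i l v hl hv)⟩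
    obtain ⟨x, hx⟩ := topAboveExcept_eq_singleton hr (key i j hij hmij)
    obtain ⟨y, hy⟩ := topAboveExcept_eq_singleton hr (key j i hij.symm hmij.symm)
    rw [hx, hy] at hdisj ⊢
    exact Set.ncard_pair fun h => hdisj x rfl h

/-- A set of `card I` coloured points that misses a colour has an even number of points whose
removal leaves exactly the colours other than `i₀`. -/
theorem even_card_erase_image [DecidableEq V] [Fintype I] [DecidableEq I] (c : V → I) (i₀ : I)
    {ρ : Finset V} (hcard : ρ.card = Fintype.card I) (hc : ρ.image c ≠ Finset.univ) :
    Even (ρ.filter fun x => (ρ.erase x).image c = Finset.univ.erase i₀).card := by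
  rcases (ρ.filter fun x => (ρ.erase x).image c = Finset.univ.erase i₀).eq_empty_or_nonempty
    with h | ⟨x, hx⟩
  · simp [h]
  obtain ⟨hxρ, hx⟩ := Finset.mem_filter.1 hx
  have hinj : Set.InjOn c (ρ.erase x : Finset V) := by
    apply Finset.injOn_of_card_image_eq
    rw [hx, Finset.card_erase_of_mem (Finset.mem_univ _), Finset.card_erase_of_mem hxρ, hcard,
      Finset.card_univ]
  have hattain : ∀ k, k ≠ i₀ → ∃ y ∈ ρ, y ≠ x ∧ c y = k := by
    intro k hk
    have : k ∈ (ρ.erase x).image c := by rw [hx]; simp [hk]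
    obtain ⟨y, hy, hyk⟩ := Finset.mem_image.1 this
    exact ⟨y, Finset.mem_of_mem_erase hy, Finset.ne_of_mem_erase hy, hyk⟩
  have hnot : ∀ y ∈ ρ, y ≠ x → c y ≠ i₀ := by
    intro y hy hyx h
    have : c y ∈ (ρ.erase x).image c := Finset.mem_image_of_mem c (Finset.mem_erase.2 ⟨hyx, hy⟩)
    rw [hx, h] at this
    simp at this
  have hcx : c x ≠ i₀ := by
    intro h
    apply hc
    rw [Finset.eq_univ_iff_forall]
    intro k
    by_cases hk : k = i₀
    · exact Finset.mem_image.2 ⟨x, hxρ, h.trans hk.symm⟩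
    · obtain ⟨y, hy, -, hyk⟩ := hattain k hk
      exact Finset.mem_image.2 ⟨y, hy, hyk⟩
  obtain ⟨y, hyρ, hyx, hcy⟩ := hattain _ hcx
  have hnot' : ∀ z ∈ ρ, c z ≠ i₀ := fun z hz => by
    by_cases h : z = x
    · exact h ▸ hcx
    · exact hnot z hz h
  have : (ρ.filter fun x => (ρ.erase x).image c = Finset.univ.erase i₀) = {x, y} := by
    ext z
    simp only [Finset.mem_filter, Finset.mem_insert, Finset.mem_singleton]
    constructor
    · rintro ⟨hz, hz'⟩
      by_cases hzx : z = x
      · exact Or.inl hzx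
      right
      have : c z ∈ (ρ.erase z).image c := by rw [hz']; simp [hnot z hz hzx]
      obtain ⟨w, hw, hwz⟩ := Finset.mem_image.1 this
      obtain ⟨hwz', hwρ⟩ := Finset.mem_erase.1 hw
      have hwx : w = x := by
        by_contra hwx
        exact hwz' (hinj (by simp [hwx, hwρ]) (by simp [hzx, hz]) hwz)
      exact hinj (by simp [hzx, hz]) (by simp [hyx, hyρ]) (by rw [← hwz, hwx, hcy])
    · rintro (rfl | rfl)
      · exact ⟨hxρ, hx⟩
      · refine ⟨hyρ, ?_⟩
        ext k
        simp only [Finset.mem_image, Finset.mem_erase, Finset.mem_univ, and_true]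
        constructor
        · rintro ⟨w, ⟨-, hw⟩, rfl⟩
          exact hnot' w hw
        · intro hk
          obtain ⟨w, hw, hwx, hwk⟩ := hattain k hk
          by_cases hwy : w = z
          · exact ⟨x, ⟨fun h => hyx h.symm, hxρ⟩, by rw [← hcy, ← hwy, hwk]⟩
          · exact ⟨w, ⟨hwy, hw⟩, hwk⟩
  rw [this, Finset.card_pair hyx.symm]
  exact even_two

/-- **Scarf's lemma**: under any colouring extending the natural one of the slack points `s i`,
there is a dominant set containing each colour exactly once. -/
theorem exists_dominant_colorful [Fintype V] [DecidableEq V] [Fintype I] [DecidableEq I]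
    [Nontrivial I] {r : I → V → L} (hr : ∀ i, Function.Injective (r i))
    {s : I → V} (hs : ∀ i v, v ≠ s i → r i (s i) < r i v)
    (hs' : ∀ i k v, k ≠ i → v ∉ Set.range s → r k v < r k (s i)) (hV : ∃ v, v ∉ Set.range s)
    (c : V → I) (hc : ∀ i, c (s i) = i) :
    ∃ ρ : Finset V, IsDominant r ρ ∧ ρ.image c = Finset.univ := by
  classical
  by_contra! hcon
  obtain ⟨i₀⟩ : Nonempty I := inferInstance
  set doors : Finset (Finset V) := Finset.univ.filter fun τ =>
    τ.card + 1 = Fintype.card I ∧ IsDominant r τ ∧ τ.image c = Finset.univ.erase i₀ with hdoors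
  set rooms : Finset (Finset V) := Finset.univ.filter fun ρ =>
    ρ.card = Fintype.card I ∧ IsDominant r ρ with hrooms
  have hcount := Finset.sum_card_bipartiteAbove_eq_sum_card_bipartiteBelow
    (s := doors) (t := rooms) (fun τ ρ => τ ⊆ ρ)
  have hdoor : ∀ τ ∈ doors, (Finset.bipartiteAbove (fun τ ρ => τ ⊆ ρ) rooms τ).card =
      if (τ : Set V) ⊆ Set.range s then 1 else 2 := by
    intro τ hτ
    obtain ⟨hτc, hτd, -⟩ := (Finset.mem_filter.1 hτ).2
    rw [← card_dominant_insert hr hs hs' hV hτd hτc, ← Set.ncard_coe_finset]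
    symm
    refine Set.ncard_congr (fun x _ => insert x τ) ?_ ?_ ?_
    · rintro x ⟨hx, hx'⟩
      simp only [Finset.coe_bipartiteAbove, hrooms, Set.mem_ofPred_eq, Finset.mem_filter,
        Finset.mem_univ, true_and, Finset.card_insert_of_notMem hx]
      exact ⟨⟨hτc, hx'⟩, Finset.subset_insert _ _⟩
    · rintro x y ⟨hx, -⟩ ⟨hy, -⟩ hxy
      exact (Finset.mem_insert.1 (hxy ▸ Finset.mem_insert_self x τ)).resolve_right hx
    · intro ρ hρ
      simp only [Finset.coe_bipartiteAbove, hrooms, Set.mem_ofPred_eq, Finset.mem_filter,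
        Finset.mem_univ, true_and] at hρ
      obtain ⟨⟨hρc, hρd⟩, hsub⟩ := hρ
      have h1 : (ρ \ τ).card = 1 := by
        rw [Finset.card_sdiff_of_subset hsub]; omega
      obtain ⟨x, hx⟩ := Finset.card_eq_one.1 h1
      have hins : insert x τ = ρ := by
        rw [← Finset.sdiff_union_of_subset hsub, hx]; rfl
      have hxτ : x ∉ τ := by
        have : x ∈ ρ \ τ := by rw [hx]; simp
        exact (Finset.mem_sdiff.1 this).2
      exact ⟨x, ⟨hxτ, hins ▸ hρd⟩, hins⟩
  have hroom : ∀ ρ ∈ rooms, Even (Finset.bipartiteBelow (fun τ ρ => τ ⊆ ρ) doors ρ).card := by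
    intro ρ hρ
    obtain ⟨hρc, hρd⟩ := (Finset.mem_filter.1 hρ).2
    convert even_card_erase_image c i₀ hρc (hcon ρ hρd) using 1
    symm
    refine Finset.card_bij (fun x _ => ρ.erase x) ?_ ?_ ?_
    · intro x hx
      obtain ⟨hx, hx'⟩ := Finset.mem_filter.1 hx
      simp only [Finset.mem_bipartiteBelow, hdoors, Finset.mem_filter, Finset.mem_univ, true_and]
      refine ⟨⟨?_, hρd.mono (Finset.erase_subset _ _), hx'⟩, Finset.erase_subset _ _⟩
      rw [Finset.card_erase_add_one hx, hρc]
    · intro x hx y hy hxy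
      exact Finset.erase_injOn ρ (Finset.mem_filter.1 hx).1 (Finset.mem_filter.1 hy).1 hxy
    · intro τ hτ
      simp only [Finset.mem_bipartiteBelow, hdoors, Finset.mem_filter, Finset.mem_univ,
        true_and] at hτ
      obtain ⟨⟨hτc, hτd, hτi⟩, hsub⟩ := hτ
      have h1 : (ρ \ τ).card = 1 := by
        rw [Finset.card_sdiff_of_subset hsub]; omega
      obtain ⟨x, hx⟩ := Finset.card_eq_one.1 h1
      have hins : ρ.erase x = τ := by
        rw [Finset.erase_eq, ← hx, Finset.sdiff_sdiff_eq_self hsub]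
      have hxρ : x ∈ ρ := by
        have : x ∈ ρ \ τ := by rw [hx]; simp
        exact (Finset.mem_sdiff.1 this).1
      exact ⟨x, Finset.mem_filter.2 ⟨hxρ, hins ▸ hτi⟩, hins⟩
  have heven : Even (∑ τ ∈ doors, if (τ : Set V) ⊆ Set.range s then 1 else 2) := by
    rw [← Finset.sum_congr rfl hdoor, hcount]
    exact Finset.even_sum _ hroom
  -- the only door consisting of slack points
  set τ₀ : Finset V := (Finset.univ.erase i₀).image s with hτ₀
  have hsinj : Function.Injective s := fun a b h => by rw [← hc a, ← hc b, h]
  have hτ₀mem : τ₀ ∈ doors := by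
    simp only [hdoors, Finset.mem_filter, Finset.mem_univ, true_and]
    refine ⟨?_, fun y => ?_, ?_⟩
    · rw [hτ₀, Finset.card_image_of_injective _ hsinj,
        Finset.card_erase_add_one (Finset.mem_univ _),
        Finset.card_univ]
    · by_cases hy : y ∈ Set.range s
      · obtain ⟨a, rfl⟩ := hy
        refine ⟨a, fun x _ => ?_⟩
        by_cases hx : x = s a
        · rw [hx]
        · exact (hs a x hx).le
      · refine ⟨i₀, fun x hx => ?_⟩
        obtain ⟨l, hl, rfl⟩ := Finset.mem_image.1 hx
        exact (hs' l i₀ y (Finset.ne_of_mem_erase hl).symm hy).le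
    · rw [hτ₀, Finset.image_image]
      have : c ∘ s = id := funext hc
      rw [this, Finset.image_id]
  rw [← Finset.add_sum_erase _ _ hτ₀mem, if_pos (by simp [hτ₀])] at heven
  have hrest : Even (∑ τ ∈ doors.erase τ₀, if (τ : Set V) ⊆ Set.range s then 1 else 2) := by
    refine Finset.even_sum _ fun τ hτ => ?_
    obtain ⟨hne, hτ⟩ := Finset.mem_erase.1 hτ
    rw [if_neg]
    · exact even_two
    intro hsub
    apply hne
    obtain ⟨hτc, -, hτi⟩ := (Finset.mem_filter.1 hτ).2
    apply Finset.eq_of_subset_of_card_le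
    · intro v hv
      obtain ⟨l, rfl⟩ := hsub hv
      refine Finset.mem_image.2 ⟨l, ?_, rfl⟩
      rw [← hτi]
      exact Finset.mem_image.2 ⟨s l, hv, hc l⟩
    · rw [hτ₀, Finset.card_image_of_injective _ hsinj,
        Finset.card_erase_of_mem (Finset.mem_univ _), Finset.card_univ]
      omega
  rw [Nat.even_add] at heven
  exact Nat.not_even_one (heven.2 hrest)

end Scarf

section Brouwer

variable {ι : Type*} [Fintype ι]

theorem exists_le_of_mem_stdSimplex [Nonempty ι] {x y : ι → ℝ} (hx : x ∈ stdSimplex ℝ ι)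
    (hy : y ∈ stdSimplex ℝ ι) : ∃ i, x i ≤ y i := by
  by_contra! h
  have := Finset.sum_lt_sum_of_nonempty Finset.univ_nonempty fun i (_ : i ∈ Finset.univ) => h i
  rw [hx.2, hy.2] at this
  exact lt_irrefl _ this

/-- A combinatorial form of Brouwer's theorem for a finite subset of the simplex. -/
theorem exists_dominated_of_finset [Nontrivial ι] {f : (ι → ℝ) → ι → ℝ}
    (hf : Set.MapsTo f (stdSimplex ℝ ι) (stdSimplex ℝ ι)) {T : Finset (ι → ℝ)}
    (hT : ∀ t ∈ T, t ∈ stdSimplex ℝ ι) (hne : T.Nonempty) :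
    ∃ (C : Finset ι) (P : Finset (ι → ℝ)), C.Nonempty ∧ P ⊆ T ∧
      (∀ i ∈ C, ∃ x ∈ P, x i ≤ f x i) ∧ ∀ t ∈ T, ∃ i ∈ C, ∀ x ∈ P, t i ≤ x i := by
  classical
  choose! g hg using fun x (hx : x ∈ stdSimplex ℝ ι) => exists_le_of_mem_stdSimplex hx (hf hx)
  let e := Fintype.equivFin (ι ⊕ T)
  let val : ι → ι ⊕ T → ℝ := fun k => Sum.elim (fun i => if i = k then -1 else 2) fun t => t.1 k
  let r : ι → ι ⊕ T → ℝ ×ₗ ℕ := fun k v => toLex (val k v, (e v : ℕ))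
  have hlt : ∀ k v w, val k v < val k w → r k v < r k w := fun k v w h =>
    Prod.Lex.toLex_lt_toLex.2 (Or.inl h)
  have hle : ∀ k v w, r k v ≤ r k w → val k v ≤ val k w := fun k v w h =>
    not_lt.1 fun h' => (hlt k w v h').not_ge h
  obtain ⟨t₀, ht₀⟩ := hne
  obtain ⟨ρ, hρ, hρc⟩ := exists_dominant_colorful (r := r) (s := Sum.inl)
    (fun k v w h => e.injective (Fin.ext (congrArg (fun p => (ofLex p).2) h)))
    (by
      rintro i (j | t) hv
      · refine hlt _ _ _ ?_
        have : j ≠ i := fun h => hv (h ▸ rfl)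
        simp only [val, Sum.elim_inl, if_pos, if_neg this]
        norm_num
      · refine hlt _ _ _ ?_
        have := (hT t t.2).1 i
        simp only [val, Sum.elim_inl, Sum.elim_inr, if_pos]
        linarith)
    (by
      rintro i k (j | t) hik hv
      · exact absurd ⟨j, rfl⟩ hv
      · refine hlt _ _ _ ?_
        have := (mem_Icc_of_mem_stdSimplex (hT t t.2) k).2
        simp only [val, Sum.elim_inl, Sum.elim_inr, if_neg hik.symm]
        linarith)
    ⟨Sum.inr ⟨t₀, ht₀⟩, by simp⟩ (Sum.elim id fun t => g t) (fun i => rfl)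
  have hdom : ∀ t ∈ T, ∃ i, Sum.inl i ∉ ρ ∧ ∀ x : T, Sum.inr x ∈ ρ → t i ≤ x.1 i := by
    intro t ht
    obtain ⟨i, hi⟩ := hρ (Sum.inr ⟨t, ht⟩)
    refine ⟨i, fun h => ?_, fun x hx => by simpa [val] using hle _ _ _ (hi _ hx)⟩
    have h1 := hle _ _ _ (hi _ h)
    have h2 := (hT t ht).1 i
    simp only [val, Sum.elim_inl, Sum.elim_inr, if_pos] at h1
    linarith
  refine ⟨Finset.univ.filter fun i => Sum.inl i ∉ ρ,
    T.filter fun t => ∃ h : t ∈ T, Sum.inr ⟨t, h⟩ ∈ ρ, ?_, Finset.filter_subset _ _, ?_, ?_⟩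
  · obtain ⟨i, hi, -⟩ := hdom t₀ ht₀
    exact ⟨i, by simpa using hi⟩
  · intro i hi
    have hi' : Sum.inl i ∉ ρ := by simpa using hi
    obtain ⟨v, hv, hvi⟩ := Finset.mem_image.1 (hρc ▸ Finset.mem_univ i)
    rcases v with j | t
    · exact absurd (show Sum.inl i ∈ ρ from (show j = i from hvi) ▸ hv) hi'
    · refine ⟨t, Finset.mem_filter.2 ⟨t.2, t.2, hv⟩, ?_⟩
      rw [← show g t = i from hvi]
      exact hg t (hT t t.2)
  · intro t ht
    obtain ⟨i, hi, h⟩ := hdom t ht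
    refine ⟨i, by simpa using hi, fun x hx => ?_⟩
    obtain ⟨-, hxT, hxρ⟩ := Finset.mem_filter.1 hx
    exact h ⟨x, hxT⟩ hxρ

theorem abs_sub_le_of_dominated {C : Finset ι} (hC : C.Nonempty) {P : Finset (ι → ℝ)}
    (hP : ∀ x ∈ P, x ∈ stdSimplex ℝ ι) (hPne : P.Nonempty) {ε : ℝ}
    (h : ∀ y ∈ stdSimplex ℝ ι, ∃ i ∈ C, ∀ x ∈ P, y i ≤ x i + ε) {x : ι → ℝ} (hx : x ∈ P) :
    (∀ i ∉ C, x i ≤ C.card * ε) ∧ ∀ i ∈ C, ∀ y ∈ P, x i ≤ y i + C.card * ε := by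
  classical
  choose m hmP hm using fun i : ι => P.exists_min_image (fun x => x i) hPne
  set S := ∑ i ∈ C, m i i with hS
  have hsum : ∑ i ∈ C, x i ≤ 1 := by
    rw [← (hP x hx).2]
    exact Finset.sum_le_sum_of_subset_of_nonneg (Finset.subset_univ _) fun i _ _ => (hP x hx).1 i
  have hS1 : S ≤ 1 := (Finset.sum_le_sum fun i _ => hm i x hx).trans hsum
  have hcard : (0 : ℝ) < C.card := by exact_mod_cast hC.card_pos
  have key : 1 - S ≤ C.card * ε := by
    obtain ⟨i, hi, hi'⟩ := h (fun i => if i ∈ C then m i i + (1 - S) / C.card else 0) (by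
      refine ⟨fun i => ?_, ?_⟩
      · dsimp only
        split_ifs
        · exact add_nonneg ((hP _ (hmP i)).1 i) (div_nonneg (by linarith) hcard.le)
        · exact le_rfl
      · rw [Finset.sum_ite_mem, Finset.univ_inter, Finset.sum_add_distrib, Finset.sum_const,
          nsmul_eq_mul, mul_div_cancel₀ _ hcard.ne']
        ring)
    have := hi' _ (hmP i)
    rw [if_pos hi, add_le_add_iff_left, div_le_iff₀ hcard] at this
    linarith
  have hle : S ≤ ∑ i ∈ C, x i := Finset.sum_le_sum fun i _ => hm i x hx
  refine ⟨fun i hi => ?_, fun i hi y hy => ?_⟩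
  · have : x i + ∑ i ∈ C, x i ≤ 1 := by
      rw [← Finset.sum_insert hi, ← (hP x hx).2]
      exact Finset.sum_le_sum_of_subset_of_nonneg (Finset.subset_univ _)
        fun i _ _ => (hP x hx).1 i
    linarith
  · have := Finset.single_le_sum (f := fun i => x i - m i i)
      (fun i _ => sub_nonneg.2 (hm i x hx)) hi
    rw [Finset.sum_sub_distrib] at this
    have := hm i y hy
    linarith

theorem exists_approx_fixed_stdSimplex [Nontrivial ι] {f : (ι → ℝ) → ι → ℝ}
    (hf : Set.MapsTo f (stdSimplex ℝ ι) (stdSimplex ℝ ι))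
    (hcont : ContinuousOn f (stdSimplex ℝ ι)) {η : ℝ} (hη : 0 < η) :
    ∃ x ∈ stdSimplex ℝ ι, ∀ i, x i ≤ f x i + η := by
  classical
  have hcomp : IsCompact (stdSimplex ℝ ι) := isCompact_stdSimplex ℝ ι
  obtain ⟨δ, hδ, hδ'⟩ := Metric.uniformContinuousOn_iff.1
    (hcomp.uniformContinuousOn_of_continuous hcont) (η / 2) (by positivity)
  set n := (Fintype.card ι : ℝ)
  have hn : 0 < n := Nat.cast_pos.2 Fintype.card_pos
  set ε := min (η / 2) (δ / 2) / n with hε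
  have hεpos : 0 < ε := by positivity
  have hnε : n * ε = min (η / 2) (δ / 2) := mul_div_cancel₀ _ hn.ne'
  obtain ⟨t, hts, htfin, htcov⟩ := hcomp.finite_cover_balls hεpos
  obtain ⟨p, hp⟩ : (stdSimplex ℝ ι).Nonempty := ⟨_, single_mem_stdSimplex ℝ (Classical.arbitrary ι)⟩
  have hnet : ∀ y ∈ stdSimplex ℝ ι, ∃ u ∈ htfin.toFinset, dist y u < ε := fun y hy => by
    simpa using htcov hy
  obtain ⟨C, P, hC, hPT, h1, h2⟩ := exists_dominated_of_finset hf (T := htfin.toFinset)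
    (fun u hu => hts (by simpa using hu)) ((hnet p hp).imp fun _ h => h.1)
  have hP : ∀ x ∈ P, x ∈ stdSimplex ℝ ι := fun x hx => hts (by simpa using hPT hx)
  obtain ⟨i₀, hi₀⟩ := hC
  obtain ⟨x, hx, -⟩ := h1 i₀ hi₀
  have hclose := fun z hz => abs_sub_le_of_dominated (ε := ε) ⟨i₀, hi₀⟩ hP ⟨x, hx⟩ (fun y hy => by
    obtain ⟨u, hu, hyu⟩ := hnet y hy
    obtain ⟨i, hi, h⟩ := h2 u hu
    refine ⟨i, hi, fun x hx => ?_⟩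
    have := (abs_le.1 ((dist_le_pi_dist y u i).trans hyu.le)).2
    linarith [h x hx]) (x := z) hz
  have hCn : C.card * ε ≤ n * ε := by
    gcongr
    exact Nat.cast_le.2 (Finset.card_le_univ C)
  have hη2 : n * ε ≤ η / 2 := hnε.trans_le (min_le_left _ _)
  have hδ2 : n * ε ≤ δ / 2 := hnε.trans_le (min_le_right _ _)
  refine ⟨x, hP x hx, fun i => ?_⟩
  by_cases hi : i ∈ C
  · obtain ⟨y, hy, hyi⟩ := h1 i hi
    have hdist : dist x y < δ := by
      refine lt_of_le_of_lt ((dist_pi_le_iff (by positivity : 0 ≤ n * ε)).2 fun j => ?_)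
        (hδ2.trans_lt (half_lt_self hδ))
      rw [Real.dist_eq, abs_le]
      by_cases hj : j ∈ C
      · have := (hclose x hx).2 j hj y hy
        have := (hclose y hy).2 j hj x hx
        constructor <;> linarith
      · have := (hclose x hx).1 j hj
        have := (hclose y hy).1 j hj
        have := (hP x hx).1 j
        have := (hP y hy).1 j
        constructor <;> linarith
    have h3 := (abs_le.1 ((dist_le_pi_dist (f x) (f y) i).trans
      (hδ' x (hP x hx) y (hP y hy) hdist).le)).1
    have := (hclose x hx).2 i hi y hy
    linarith
  · have := (hclose x hx).1 i hi
    have := (hf (hP x hx)).1 i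
    linarith

/-- **Brouwer's fixed-point theorem** for the standard simplex. -/
theorem exists_fixed_stdSimplex [Nonempty ι] {f : (ι → ℝ) → ι → ℝ}
    (hf : Set.MapsTo f (stdSimplex ℝ ι) (stdSimplex ℝ ι))
    (hcont : ContinuousOn f (stdSimplex ℝ ι)) : ∃ x ∈ stdSimplex ℝ ι, f x = x := by
  classical
  have hp : Pi.single (Classical.arbitrary ι) 1 ∈ stdSimplex ℝ ι := single_mem_stdSimplex ℝ _
  rcases subsingleton_or_nontrivial ι with hι | hι
  · obtain ⟨_⟩ := nonempty_unique ι
    rw [stdSimplex_unique] at hf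
    exact ⟨_, by rw [stdSimplex_unique]; exact rfl, hf rfl⟩
  have hle : ∀ i, ContinuousOn (fun x => x i - f x i) (stdSimplex ℝ ι) := fun i =>
    (continuous_apply i).continuousOn.sub ((continuous_apply i).comp_continuousOn hcont)
  obtain ⟨x, hx, hmin⟩ := (isCompact_stdSimplex ℝ ι).exists_isMinOn ⟨_, hp⟩
    (ContinuousOn.finset_sup'_apply Finset.univ_nonempty fun i (_ : i ∈ Finset.univ) => hle i)
  have hxle : ∀ i, x i ≤ f x i := by
    intro i
    refine le_of_forall_pos_le_add fun η hη => ?_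
    obtain ⟨y, hy, hyη⟩ := exists_approx_fixed_stdSimplex hf hcont hη
    have h1 := hmin hy
    have h2 := Finset.le_sup' (fun i => x i - f x i) (Finset.mem_univ i)
    have h3 := Finset.sup'_le (s := Finset.univ) Finset.univ_nonempty (fun i => y i - f y i)
      (a := η) fun i _ => by linarith [hyη i]
    simp only [Set.mem_ofPred_eq] at h1
    linarith
  refine ⟨x, hx, funext fun i => ?_⟩
  have := (Finset.sum_eq_sum_iff_of_le fun i (_ : i ∈ Finset.univ) => hxle i).1
    (hx.2.trans (hf hx).2.symm)
  exact (this i (Finset.mem_univ i)).symm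

end Brouwer

section StarConvexValued

variable {E : Type*}

/-- A uniform version of upper semicontinuity for a closed relation on a compact set. -/
theorem exists_uniform_upperSemicontinuous [MetricSpace E] {C : Set E} (hC : IsCompact C)
    {G : Set (E × E)}
    (hG : IsClosed G) (hGC : G ⊆ C ×ˢ C) {ε : ℝ} (hε : 0 < ε) :
    ∃ r > 0, ∀ y ∈ C, ∃ x ∈ C, dist x y < ε ∧ ∀ y' z, (y', z) ∈ G → dist y' y < r →
      ∃ z', (x, z') ∈ G ∧ dist z z' < ε := by
  have hloc : ∀ x : E, ∃ δ > 0, ∀ y' z, (y', z) ∈ G → dist y' x < δ →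
      ∃ z', (x, z') ∈ G ∧ dist z z' < ε := by
    intro x
    let K : Set (E × E) := G ∩ ⋂ (z' : E) (_ : (x, z') ∈ G), {p | ε ≤ dist p.2 z'}
    have hK : IsCompact K := (hC.prod hC).of_isClosed_subset
      (hG.inter (isClosed_biInter fun z' _ =>
        isClosed_le continuous_const (continuous_snd.dist continuous_const)))
      (Set.inter_subset_left.trans hGC)
    have hx : x ∉ Prod.fst '' K := by
      rintro ⟨⟨x', z⟩, ⟨hz, hz'⟩, rfl⟩
      have h : ε ≤ dist z z := by simpa using Set.mem_iInter₂.1 hz' z hz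
      rw [dist_self] at h
      exact hε.not_ge h
    obtain ⟨δ, hδ, hball⟩ := Metric.isOpen_iff.1
      (hK.image continuous_fst).isClosed.isOpen_compl x hx
    refine ⟨δ, hδ, fun y' z hz hy' => ?_⟩
    by_contra! hcon
    exact hball (Metric.mem_ball.2 hy')
      ⟨(y', z), ⟨hz, Set.mem_iInter₂.2 fun z' hz' => hcon z' hz'⟩, rfl⟩
  choose δ hδ hδ' using hloc
  obtain ⟨r, hr, hr'⟩ := lebesgue_number_lemma_of_metric
    (c := fun x : C => Metric.ball (x : E) (min ε (δ x))) hC (fun _ => Metric.isOpen_ball)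
    fun x hx => Set.mem_iUnion.2 ⟨⟨x, hx⟩, Metric.mem_ball_self (lt_min hε (hδ x))⟩
  refine ⟨r, hr, fun y hy => ?_⟩
  obtain ⟨x, hx⟩ := hr' y hy
  refine ⟨x, x.2, ?_, fun y' z hz hy' => hδ' x y' z hz ?_⟩
  · rw [dist_comm]
    exact (Metric.mem_ball.1 (hx (Metric.mem_ball_self hr))).trans_le (min_le_left _ _)
  · exact (Metric.mem_ball.1 (hx (Metric.mem_ball.2 hy'))).trans_le (min_le_right _ _)

/-- For a closed relation with star-convex values there are `k` selections all of whose
convex combinations at nearby points lie close to the graph. -/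
theorem exists_selections_convex_comb [NormedAddCommGroup E] [NormedSpace ℝ E] {C : Set E}
    (hC : IsCompact C) {G : Set (E × E)}
    (hG : IsClosed G) (hGC : G ⊆ C ×ˢ C) {s : E → E} (hs : ∀ x ∈ C, (x, s x) ∈ G)
    (hstar : ∀ x ∈ C, StarConvex ℝ (s x) {z | (x, z) ∈ G}) (k : ℕ) {ε : ℝ} (hε : 0 < ε) :
    ∃ d > 0, ∃ c : ℕ → E → E, (∀ j < k, ∀ y ∈ C, c j y ∈ C) ∧
      ∀ y ∈ C, ∀ (u : ℕ → E) (w : ℕ → ℝ), (∀ j, u j ∈ C) → (∀ j, 0 ≤ w j) →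
        (∀ j < k, w j ≠ 0 → dist (u j) y < d) → ∑ j ∈ Finset.range k, w j = 1 →
        ∃ x z, (x, z) ∈ G ∧ dist x y < ε ∧
          dist z (∑ j ∈ Finset.range k, w j • c j (u j)) < ε := by
  induction k generalizing ε with
  | zero => exact ⟨1, one_pos, fun _ => id, by simp, by simp⟩
  | succ k ih =>
    obtain ⟨r, hr, hU⟩ := exists_uniform_upperSemicontinuous hC hG hGC (half_pos hε)
    choose! p hpC hpd hp using hU
    obtain ⟨d, hd, c, hcC, hc⟩ := ih (ε := min (ε / 2) (r / 2)) (by positivity)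
    refine ⟨min d (min (ε / 2) (r / 2)), by positivity,
      fun j => if j = k then fun y => s (p y) else c j, fun j hj y hy => ?_, ?_⟩
    · dsimp only
      split_ifs with h
      · exact (hGC (hs _ (hpC y hy))).2
      · exact hcC j (by omega) y hy
    intro y hy u w hu hw hdist hsum
    have hsame : ∑ j ∈ Finset.range k, w j • (if j = k then fun y => s (p y) else c j) (u j)
        = ∑ j ∈ Finset.range k, w j • c j (u j) :=
      Finset.sum_congr rfl fun j hj => by rw [if_neg (Finset.mem_range.1 hj).ne]
    rw [Finset.sum_range_succ, hsame]
    simp only [if_true]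
    rw [Finset.sum_range_succ] at hsum
    have hdist' : ∀ j < k, w j ≠ 0 → dist (u j) y < d := fun j hj h =>
      (hdist j (by omega) h).trans_le (min_le_left _ _)
    have hε2 : min (ε / 2) (r / 2) ≤ ε / 2 := min_le_left _ _
    have hr2 : min (ε / 2) (r / 2) ≤ r / 2 := min_le_right _ _
    by_cases hwk : w k = 0
    · obtain ⟨x, z, hxz, hx, hz⟩ := hc y hy u w hu hw hdist' (by simpa [hwk] using hsum)
      refine ⟨x, z, hxz, by linarith, ?_⟩
      rw [hwk, zero_smul, add_zero]
      linarith
    have hk : dist (u k) y < min (ε / 2) (r / 2) :=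
      (hdist k (by omega) hwk).trans_le (min_le_right _ _)
    have hpy : dist (p (u k)) y < ε := by
      have := hpd (u k) (hu k)
      linarith [dist_triangle (p (u k)) (u k) y]
    set S := ∑ j ∈ Finset.range k, w j with hS
    have hSnn : 0 ≤ S := Finset.sum_nonneg fun j _ => hw j
    rcases hSnn.eq_or_lt with hS0 | hSpos
    · have hz : ∀ j ∈ Finset.range k, w j = 0 :=
        (Finset.sum_eq_zero_iff_of_nonneg fun j _ => hw j).1 hS0.symm
      refine ⟨p (u k), s (p (u k)), hs _ (hpC _ (hu k)), hpy, ?_⟩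
      rw [Finset.sum_eq_zero fun j hj => by rw [hz j hj, zero_smul], zero_add,
        show w k = 1 by linarith, one_smul, dist_self]
      exact hε
    obtain ⟨x', z', hxz', hx', hz'⟩ := hc y hy u (fun j => w j / S) hu
      (fun j => div_nonneg (hw j) hSnn) (fun j hj h => hdist' j hj fun h0 => h (by simp [h0]))
      (by rw [← Finset.sum_div, div_self hSpos.ne'])
    set v := ∑ j ∈ Finset.range k, (w j / S) • c j (u j) with hv
    have hSv : ∑ j ∈ Finset.range k, w j • c j (u j) = S • v := by
      rw [hv, Finset.smul_sum]
      exact Finset.sum_congr rfl fun j _ => by rw [smul_smul, mul_div_cancel₀ _ hSpos.ne']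
    obtain ⟨z, hz, hzz'⟩ := hp (u k) (hu k) x' z' hxz' (by
      linarith [dist_triangle_right x' (u k) y])
    refine ⟨p (u k), w k • s (p (u k)) + S • z,
      hstar _ (hpC _ (hu k)) hz (hw k) hSnn (by linarith), hpy, ?_⟩
    rw [hSv, add_comm, dist_add_right, dist_smul₀, Real.norm_of_nonneg hSnn]
    have h1 : dist z v < ε := by linarith [dist_triangle z z' v, dist_comm z z']
    have h2 : S ≤ 1 := by linarith [hw k]
    exact (mul_le_of_le_one_left dist_nonneg h2).trans_lt h1

end StarConvexValued

section Coloring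

variable {ι : Type*} [Fintype ι]

/-- A weight vanishing exactly on the boundaries of the cubes of the `k`-th grid of mesh `1 / N`. -/
noncomputable def gridWeight (N : ℝ) (k : ℕ) (x : ι → ℝ) : ℝ :=
  ∏ i, |Real.sin ((N * x i - k / (Fintype.card ι + 1)) * Real.pi)|

/-- The index of the cube of the `k`-th grid of mesh `1 / N` containing `x`. -/
noncomputable def gridLabel (N : ℝ) (k : ℕ) (x : ι → ℝ) (i : ι) : ℤ :=
  ⌊N * x i - k / (Fintype.card ι + 1)⌋

theorem continuous_gridWeight (N : ℝ) (k : ℕ) : Continuous (gridWeight (ι := ι) N k) := by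
  unfold gridWeight
  fun_prop

theorem gridWeight_nonneg (N : ℝ) (k : ℕ) (x : ι → ℝ) : 0 ≤ gridWeight N k x :=
  Finset.prod_nonneg fun _ _ => abs_nonneg _

theorem gridWeight_eq_zero {N : ℝ} {k : ℕ} {x : ι → ℝ} :
    gridWeight N k x = 0 ↔ ∃ i, ∃ m : ℤ, N * x i - k / (Fintype.card ι + 1) = m := by
  simp only [gridWeight, Finset.prod_eq_zero_iff, Finset.mem_univ, true_and, abs_eq_zero,
    Real.sin_eq_zero_iff, mul_eq_mul_right_iff, Real.pi_ne_zero, or_false]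
  simp only [eq_comm]

theorem sum_gridWeight_pos (N : ℝ) (x : ι → ℝ) :
    0 < ∑ k ∈ Finset.range (Fintype.card ι + 1), gridWeight N k x := by
  refine (Finset.sum_nonneg fun k _ => gridWeight_nonneg N k x).lt_of_ne' fun h => ?_
  rw [Finset.sum_eq_zero_iff_of_nonneg fun k _ => gridWeight_nonneg N k x] at h
  choose g m hgm using fun k : Fin (Fintype.card ι + 1) =>
    gridWeight_eq_zero.1 (h k (Finset.mem_range.2 k.2))
  obtain ⟨a, b, hab, hgab⟩ := Fintype.exists_ne_map_eq_of_card_lt g (by simp)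
  have ha := hgm a
  have hb := hgm b
  rw [hgab] at ha
  have hpos : (0 : ℝ) < Fintype.card ι + 1 := by positivity
  have hdiff : ((b : ℕ) : ℝ) - (a : ℕ) = (m a - m b) * (Fintype.card ι + 1) := by
    have : ((b : ℕ) : ℝ) / (Fintype.card ι + 1) - (a : ℕ) / (Fintype.card ι + 1) = m a - m b := by
      linarith
    rw [← this, ← sub_div, div_mul_cancel₀ _ hpos.ne']
  have hcast : ((b : ℕ) : ℤ) - (a : ℕ) = (m a - m b) * ((Fintype.card ι + 1 : ℕ) : ℤ) := by
    exact_mod_cast hdiff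
  have hzero := Int.eq_zero_of_abs_lt_dvd (Dvd.intro_left _ hcast.symm) (by
    have := a.2
    have := b.2
    rw [abs_lt]
    constructor <;> omega)
  exact hab (Fin.ext (by omega))

theorem eventually_gridLabel_eq {N : ℝ} {k : ℕ} {x : ι → ℝ} (hx : gridWeight N k x ≠ 0) :
    ∀ᶠ y in 𝓝 x, gridLabel N k y = gridLabel N k x := by
  have h : ∀ i, ∀ᶠ y in 𝓝 x, gridLabel N k y i = gridLabel N k x i := by
    intro i
    have hlt : (gridLabel N k x i : ℝ) < N * x i - k / (Fintype.card ι + 1) :=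
      (Int.floor_le _).lt_of_ne fun h => hx (gridWeight_eq_zero.2 ⟨i, _, h.symm⟩)
    have hcont : Continuous fun y : ι → ℝ => N * y i - k / (Fintype.card ι + 1) := by fun_prop
    filter_upwards [hcont.continuousAt.eventually (Ioo_mem_nhds hlt (Int.lt_floor_add_one _))]
      with y hy
    exact Int.floor_eq_iff.2 ⟨hy.1.le, hy.2⟩
  filter_upwards [eventually_all.2 h] with y hy
  exact funext hy

theorem dist_le_of_gridLabel_eq {N : ℝ} (hN : 0 < N) {k : ℕ} {x y : ι → ℝ}
    (h : gridLabel N k x = gridLabel N k y) : dist x y ≤ 1 / N := by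
  refine (dist_pi_le_iff (by positivity)).2 fun i => ?_
  have := (Int.abs_sub_lt_one_of_floor_eq_floor (congrFun h i)).le
  rw [Real.dist_eq, le_div_iff₀ hN, ← abs_of_pos hN, ← abs_mul]
  convert this using 2
  ring

theorem continuous_gridWeight_smul {E : Type*} [NormedAddCommGroup E] [NormedSpace ℝ E] {N : ℝ}
    {k : ℕ} {F : (ι → ℤ) → E} {M : ℝ} (hF : ∀ l, ‖F l‖ ≤ M) :
    Continuous fun x => gridWeight N k x • F (gridLabel N k x) := by
  refine continuous_iff_continuousAt.2 fun x => ?_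
  by_cases hx : gridWeight N k x = 0
  · rw [ContinuousAt, hx, zero_smul]
    refine squeeze_zero_norm (a := fun y => gridWeight N k y * M) (fun y => ?_) ?_
    · rw [norm_smul, Real.norm_of_nonneg (gridWeight_nonneg N k y)]
      exact mul_le_mul_of_nonneg_left (hF _) (gridWeight_nonneg N k y)
    · have := ((continuous_gridWeight (ι := ι) N k).mul_const M).tendsto x
      rwa [hx, zero_mul] at this
  · refine ContinuousAt.congr (f := fun y => gridWeight N k y • F (gridLabel N k x)) ?_ ?_
    · exact ((continuous_gridWeight N k).smul continuous_const).continuousAt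
    · filter_upwards [eventually_gridLabel_eq hx] with y hy
      rw [hy]

/-- Families of selections along a compact set `K` in `ι → ℝ` can be patched together continuously
by convex combinations of at most `card ι + 1` values at nearby points. -/
theorem exists_continuous_patching {E : Type*} [NormedAddCommGroup E] [NormedSpace ℝ E]
    {C : Set E} (hC : Bornology.IsBounded C) (hCne : C.Nonempty) {K : Set (ι → ℝ)}
    (hK : IsCompact K) {p : (ι → ℝ) → E} (hp : ContinuousOn p K) (hpC : Set.MapsTo p K C)
    {c : ℕ → E → E} (hc : ∀ j < Fintype.card ι + 1, ∀ y ∈ C, c j y ∈ C) {d : ℝ} (hd : 0 < d) :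
    ∃ h : (ι → ℝ) → E, Continuous h ∧ ∀ x ∈ K, ∃ (u : ℕ → E) (w : ℕ → ℝ), (∀ j, u j ∈ C) ∧
      (∀ j, 0 ≤ w j) ∧ (∀ j, w j ≠ 0 → dist (u j) (p x) < d) ∧
      ∑ j ∈ Finset.range (Fintype.card ι + 1), w j = 1 ∧
      h x = ∑ j ∈ Finset.range (Fintype.card ι + 1), w j • c j (u j) := by
  classical
  obtain ⟨y₀, hy₀⟩ := hCne
  obtain ⟨M, hM⟩ := hC.exists_norm_le
  obtain ⟨δ, hδ, hδ'⟩ := Metric.uniformContinuousOn_iff.1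
    (hK.uniformContinuousOn_of_continuous hp) d hd
  obtain ⟨N, hN, hNδ⟩ : ∃ N : ℝ, 0 < N ∧ 1 / N < δ :=
    ⟨2 / δ, by positivity, by rw [one_div_div]; exact half_lt_self hδ⟩
  have hrep : ∀ (k : ℕ) (l : ι → ℤ), ∃ y ∈ C, ∀ x ∈ K, gridLabel N k x = l → dist y (p x) < d := by
    intro k l
    by_cases h : ∃ x ∈ K, gridLabel N k x = l
    · obtain ⟨x, hx, rfl⟩ := h
      refine ⟨p x, hpC hx, fun x' hx' hl => hδ' x hx x' hx' ?_⟩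
      exact (dist_le_of_gridLabel_eq hN hl.symm).trans_lt hNδ
    · exact ⟨y₀, hy₀, fun x hx hl => absurd ⟨x, hx, hl⟩ h⟩
  choose rep hrepC hrep using hrep
  let W : (ι → ℝ) → ℝ := fun x => ∑ k ∈ Finset.range (Fintype.card ι + 1), gridWeight N k x
  have hW : ∀ x, 0 < W x := sum_gridWeight_pos N
  refine ⟨fun x => (W x)⁻¹ • ∑ k ∈ Finset.range (Fintype.card ι + 1),
    gridWeight N k x • c k (rep k (gridLabel N k x)), ?_, fun x hx => ?_⟩
  · refine Continuous.smul ?_ (continuous_finsetSum _ fun k hk => ?_)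
    · exact (continuous_finsetSum _ fun k _ => continuous_gridWeight N k).inv₀ fun x => (hW x).ne'
    · exact continuous_gridWeight_smul (F := fun l => c k (rep k l)) fun l =>
        hM _ (hc k (Finset.mem_range.1 hk) _ (hrepC k l))
  · refine ⟨fun k => rep k (gridLabel N k x), fun k => (W x)⁻¹ * gridWeight N k x,
      fun k => hrepC k _, fun k => mul_nonneg (inv_nonneg.2 (hW x).le) (gridWeight_nonneg N k x),
      fun k _ => hrep k _ x hx rfl, ?_, ?_⟩
    · rw [← Finset.mul_sum, inv_mul_cancel₀ (hW x).ne']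
    · simp only [Finset.smul_sum, smul_smul]

end Coloring

section FixedPoint

variable {E : Type*} [NormedAddCommGroup E] [NormedSpace ℝ E]

/-- Schauder's projection: a compact set is approximated by a finite-dimensional simplex. -/
theorem exists_schauder_projection {C : Set E} (hC : IsCompact C) (hne : C.Nonempty) {ε : ℝ}
    (hε : 0 < ε) : ∃ (T : Finset E) (σ : E → T → ℝ), T.Nonempty ∧ (T : Set E) ⊆ C ∧
      ContinuousOn σ C ∧ ∀ y ∈ C, σ y ∈ stdSimplex ℝ T ∧ dist (∑ i, σ y i • (i : E)) y ≤ ε := by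
  classical
  obtain ⟨t, htC, htfin, htcov⟩ := hC.finite_cover_balls hε
  have hnet : ∀ y ∈ C, ∃ z ∈ htfin.toFinset, dist y z < ε := fun y hy => by
    simpa using htcov hy
  let v : E → htfin.toFinset → ℝ := fun y i => max 0 (ε - dist y i)
  have hv : ∀ y i, 0 ≤ v y i := fun y i => le_max_left _ _
  have hvcont : ∀ i, Continuous fun y => v y i := fun i => by fun_prop
  have hpos : ∀ y ∈ C, 0 < ∑ i, v y i := by
    intro y hy
    obtain ⟨z, hz, hyz⟩ := hnet y hy
    exact Finset.sum_pos' (fun i _ => hv y i)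
      ⟨⟨z, hz⟩, Finset.mem_univ _, lt_max_of_lt_right (sub_pos.2 hyz)⟩
  refine ⟨htfin.toFinset, fun y i => v y i / ∑ j, v y j, ?_, by simpa using htC, ?_,
    fun y hy => ?_⟩
  · obtain ⟨y, hy⟩ := hne
    exact (hnet y hy).imp fun _ h => h.1
  · exact continuousOn_pi.2 fun i => (hvcont i).continuousOn.div
      (continuous_finsetSum _ fun j _ => hvcont j).continuousOn fun y hy => (hpos y hy).ne'
  · have hsum : ∑ i, v y i / ∑ j, v y j = 1 := by rw [← Finset.sum_div, div_self (hpos y hy).ne']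
    have hnn : ∀ i, 0 ≤ v y i / ∑ j, v y j := fun i => div_nonneg (hv y i) (hpos y hy).le
    refine ⟨⟨hnn, hsum⟩, ?_⟩
    have hy' : y = ∑ i, (v y i / ∑ j, v y j) • y := by rw [← Finset.sum_smul, hsum, one_smul]
    calc dist (∑ i : htfin.toFinset, (v y i / ∑ j, v y j) • (i : E)) y
        = dist (∑ i : htfin.toFinset, (v y i / ∑ j, v y j) • (i : E))
            (∑ i, (v y i / ∑ j, v y j) • y) := by rw [← hy']
      _ ≤ ∑ i : htfin.toFinset, dist ((v y i / ∑ j, v y j) • (i : E)) ((v y i / ∑ j, v y j) • y) :=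
          dist_sum_sum_le _ _ _
      _ ≤ ∑ i, (v y i / ∑ j, v y j) * ε := by
          refine Finset.sum_le_sum fun i _ => ?_
          rw [dist_smul₀, Real.norm_of_nonneg (hnn i)]
          rcases (hnn i).eq_or_lt with h0 | h0
          · rw [← h0, zero_mul, zero_mul]
          · have : 0 < v y i := (div_pos_iff_of_pos_right (hpos y hy)).1 h0
            have : 0 < ε - dist y i := (lt_max_iff.1 this).resolve_left (lt_irrefl _)
            rw [dist_comm]
            gcongr
            linarith
      _ = ε := by rw [← Finset.sum_mul, hsum, one_mul]

/-- A closed relation on a compact convex set whose values are star-convex about a selection has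
a fixed point. -/
theorem exists_fixed_of_starConvex {C : Set E} (hC : IsCompact C) (hconv : Convex ℝ C)
    (hne : C.Nonempty) {G : Set (E × E)} (hG : IsClosed G) (hGC : G ⊆ C ×ˢ C) {s : E → E}
    (hs : ∀ x ∈ C, (x, s x) ∈ G) (hstar : ∀ x ∈ C, StarConvex ℝ (s x) {z | (x, z) ∈ G}) :
    ∃ x, (x, x) ∈ G := by
  obtain ⟨x₀, hx₀⟩ := hne
  have hGcomp : IsCompact G := (hC.prod hC).of_isClosed_subset hG hGC
  obtain ⟨⟨x, z⟩, hxz, hmin⟩ := hGcomp.exists_isMinOn ⟨_, hs x₀ hx₀⟩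
    (continuous_fst.dist continuous_snd).continuousOn
  suffices x = z from ⟨x, by simpa [← this] using hxz⟩
  by_contra hne
  have hdist : 0 < dist x z := dist_pos.2 hne
  set ε := dist x z / 3 with hε
  have hεpos : 0 < ε := by positivity
  obtain ⟨T, σ, hT, hTC, hσ, hσ'⟩ := exists_schauder_projection hC ⟨x₀, hx₀⟩ hεpos
  have : Nonempty T := hT.to_subtype
  obtain ⟨d, hd, c, hcC, hc⟩ :=
    exists_selections_convex_comb hC hG hGC hs hstar (Fintype.card T + 1) hεpos
  let p : (T → ℝ) → E := fun l => ∑ i, l i • (i : E)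
  have hp : Continuous p := by fun_prop
  have hpC : Set.MapsTo p (stdSimplex ℝ T) C := fun l hl =>
    hconv.sum_mem (fun i _ => hl.1 i) hl.2 fun i _ => hTC i.2
  obtain ⟨h, hh, hh'⟩ := exists_continuous_patching hC.isBounded ⟨x₀, hx₀⟩
    (isCompact_stdSimplex ℝ T) hp.continuousOn hpC hcC hd
  have hhC : Set.MapsTo h (stdSimplex ℝ T) C := by
    intro l hl
    obtain ⟨u, w, hu, hw, -, hsum, heq⟩ := hh' l hl
    rw [heq]
    exact hconv.sum_mem (fun i _ => hw i) hsum fun j hj => hcC j (Finset.mem_range.1 hj) _ (hu j)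
  obtain ⟨l, hl, hfix⟩ := exists_fixed_stdSimplex (f := fun l => σ (h l))
    (fun l hl => (hσ' _ (hhC hl)).1) (hσ.comp hh.continuousOn hhC)
  obtain ⟨u, w, hu, hw, hwd, hsum, heq⟩ := hh' l hl
  obtain ⟨x', z', hxz', hx', hz'⟩ := hc (p l) (hpC hl) u w hu hw (fun j _ => hwd j) hsum
  rw [← heq] at hz'
  have h1 := (hσ' _ (hhC hl)).2
  rw [show σ (h l) = l from hfix] at h1
  have h2 : dist x z ≤ dist x' z' := hmin hxz'
  have h3 : dist (p l) (h l) ≤ ε := h1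
  linarith [dist_triangle x' (p l) z', dist_triangle (p l) (h l) z', dist_comm z' (h l)]

end FixedPoint

section Farthest

variable {X : Type*} [NormedAddCommGroup X] {A : Set X}

theorem norm_sub_le_farDist (hbd : Bornology.IsBounded A) (x : X) {a : X} (ha : a ∈ A) :
    ‖x - a‖ ≤ farDist x A := by
  refine le_csSup ?_ ⟨a, ha, rfl⟩
  obtain ⟨M, hM⟩ := hbd.exists_norm_le
  refine ⟨‖x‖ + M, ?_⟩
  rintro _ ⟨b, hb, rfl⟩
  exact (norm_sub_le x b).trans (by linarith [hM b hb])

theorem closure_subset_closedBall_farDist (hbd : Bornology.IsBounded A) (x : X) :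
    closure A ⊆ Metric.closedBall x (farDist x A) :=
  closure_minimal (fun a ha => by
    rw [mem_closedBall_iff_norm']
    exact norm_sub_le_farDist hbd x ha) Metric.isClosed_closedBall

theorem lipschitzWith_farDist (hbd : Bornology.IsBounded A) (hne : A.Nonempty) :
    LipschitzWith 1 fun x => farDist x A := by
  refine LipschitzWith.of_le_add fun x y => csSup_le (hne.image _) ?_
  rintro _ ⟨a, ha, rfl⟩
  rw [dist_eq_norm]
  linarith [norm_sub_le_farDist hbd y ha, norm_sub_le_norm_sub_add_norm_sub x y a]

theorem dist_le_two_mul_farDist (hbd : Bornology.IsBounded A) {a b : X} (ha : a ∈ A) (hb : b ∈ A)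
    (x : X) : dist a b ≤ 2 * farDist x A := by
  have h1 := norm_sub_le_farDist hbd x ha
  have h2 := norm_sub_le_farDist hbd x hb
  rw [← dist_eq_norm] at h1 h2
  linarith [dist_triangle_left a b x]

/-- If `u` and `v` have norm at most `D` and `‖u + v‖` attains the bound `2 * D`, then the norm is
additive on the cone they span. -/
theorem mul_le_norm_smul_add_smul [NormedSpace ℝ X] {u v : X} {D α β : ℝ} (hu : ‖u‖ ≤ D)
    (hv : ‖v‖ ≤ D) (huv : 2 * D ≤ ‖u + v‖) (hα : 0 ≤ α) (hβ : 0 ≤ β) :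
    (α + β) * D ≤ ‖α • u + β • v‖ := by
  wlog h : β ≤ α generalizing u v α β
  · rw [add_comm α, add_comm (α • u)]
    exact this hv hu (by rwa [add_comm]) hβ hα (le_of_not_ge h)
  have h1 : α • (u + v) = (α • u + β • v) + (α - β) • v := by module
  have h2 : α * ‖u + v‖ ≤ ‖α • u + β • v‖ + (α - β) * ‖v‖ := by
    have := norm_add_le (α • u + β • v) ((α - β) • v)
    rwa [← h1, norm_smul, norm_smul (α - β), Real.norm_of_nonneg hα,
      Real.norm_of_nonneg (sub_nonneg.2 h)] at this
  nlinarith [mul_le_mul_of_nonneg_left huv hα, mul_le_mul_of_nonneg_left hv (sub_nonneg.2 h)]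

variable {q : X → X}

theorem farthest_mem (hq : ∀ x, farPoints x A = {q x}) (x : X) :
    q x ∈ A ∧ ‖x - q x‖ = farDist x A := by
  have : q x ∈ farPoints x A := hq x ▸ rfl
  exact this

theorem eq_farthest_of_farDist_le (hbd : Bornology.IsBounded A)
    (hq : ∀ x, farPoints x A = {q x}) {x a : X} (ha : a ∈ A) (h : farDist x A ≤ ‖x - a‖) :
    a = q x := by
  have : a ∈ farPoints x A := ⟨ha, le_antisymm (norm_sub_le_farDist hbd x ha) h⟩
  rwa [hq x] at this

/-- If reflecting `z` through `x` doubles the farthest distance, then the farthest point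
is unchanged. -/
theorem farDist_reflection_le (hbd : Bornology.IsBounded A) (hq : ∀ x, farPoints x A = {q x})
    {x z : X} (hz : ‖x - z‖ ≤ farDist x A) (h : 2 * farDist x A ≤ farDist (x + (x - z)) A) :
    2 * farDist x A ≤ ‖(x - q x) + (x - z)‖ := by
  obtain ⟨hmem, hfar⟩ := farthest_mem hq (x + (x - z))
  have heq : x + (x - z) - q (x + (x - z)) = (x - q (x + (x - z))) + (x - z) := by abel
  rw [heq] at hfar
  have := norm_add_le (x - q (x + (x - z))) (x - z)
  have := eq_farthest_of_farDist_le hbd hq hmem (x := x) (by linarith)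
  rw [← this, hfar]
  exact h

/-- Along a convergent sequence, the farthest points either return to the farthest point of the
limit or accumulate at a limit point of the set. -/
theorem exists_subseq_farthest (hbd : Bornology.IsBounded A) (hne : A.Nonempty)
    (hq : ∀ x, farPoints x A = {q x}) (hM : MCompact A) {x : ℕ → X} {x₀ : X}
    (hx : Tendsto x atTop (𝓝 x₀)) : ∃ φ : ℕ → ℕ, StrictMono φ ∧
      ((∀ n, q (x (φ n)) = q x₀) ∨ ∃ b ∈ derivedSet A, ‖x₀ - b‖ = farDist x₀ A ∧
        Tendsto (fun n => q (x (φ n))) atTop (𝓝 b)) := by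
  by_cases hfreq : ∃ᶠ n in atTop, q (x n) = q x₀
  · obtain ⟨φ, hφ, h⟩ := extraction_of_frequently_atTop hfreq
    exact ⟨φ, hφ, Or.inl h⟩
  have hD : Tendsto (fun n => farDist (x n) A) atTop (𝓝 (farDist x₀ A)) :=
    ((lipschitzWith_farDist hbd hne).continuous.tendsto x₀).comp hx
  have hmax : Tendsto (fun n => ‖x₀ - q (x n)‖) atTop (𝓝 (farDist x₀ A)) := by
    have hlow : Tendsto (fun n => farDist (x n) A - ‖x n - x₀‖) atTop (𝓝 (farDist x₀ A)) := by
      simpa using hD.sub (tendsto_iff_norm_sub_tendsto_zero.1 hx)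
    refine tendsto_of_tendsto_of_tendsto_of_le_of_le hlow tendsto_const_nhds (fun n => ?_)
      fun n => norm_sub_le_farDist hbd x₀ (farthest_mem hq (x n)).1
    have := norm_sub_le_norm_sub_add_norm_sub (x n) x₀ (q (x n))
    rw [(farthest_mem hq (x n)).2] at this
    simp only
    linarith
  obtain ⟨φ, b, hφ, hb⟩ := hM (fun n => q (x n)) ⟨fun n => (farthest_mem hq (x n)).1, x₀, hmax⟩
  have hfar : ‖x₀ - b‖ = farDist x₀ A :=
    tendsto_nhds_unique ((tendsto_const_nhds.sub hb).norm) (hmax.comp hφ.tendsto_atTop)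
  refine ⟨φ, hφ, Or.inr ⟨b, ?_, hfar, hb⟩⟩
  refine accPt_iff_frequently.2 (hb.frequently ?_)
  intro hcon
  have hev : ∀ᶠ n in atTop, q (x (φ n)) = b := by
    filter_upwards [hcon] with n hn
    by_contra h
    exact hn ⟨h, (farthest_mem hq _).1⟩
  have hbA : b ∈ A := by
    obtain ⟨n, hn⟩ := hev.exists
    exact hn ▸ (farthest_mem hq _).1
  have hbq : b = q x₀ := eq_farthest_of_farDist_le hbd hq hbA hfar.ge
  obtain ⟨n, hn, hn'⟩ := (hev.and (hφ.tendsto_atTop.eventually (not_frequently.1 hfreq))).exists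
  exact hn' (hn.trans hbq)

end Farthest

section FarRelation

variable {X : Type*} [NormedAddCommGroup X] [NormedSpace ℝ X] {A B C : Set X} {q hat : X → X}

/-- The relation sending `x` to the union of the segments from `hat (q x)` to the points `z` of `C`
such that `q x` realizes the farthest distance `2 * farDist x A` from the reflection of `z`
through `x`. -/
def farRelation (A C : Set X) (q hat : X → X) : Set (X × X) :=
  {p | p.1 ∈ C ∧ ∃ t ∈ Set.Icc (0 : ℝ) 1, ∃ z ∈ C,
    p.2 = hat (q p.1) + t • (z - hat (q p.1)) ∧
      t * (2 * farDist p.1 A - ‖(p.1 - q p.1) + (p.1 - z)‖) ≤ 0}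

theorem farRelation_subset (hC : Convex ℝ C) (hhat : ∀ a ∈ A, hat a ∈ C)
    (hq : ∀ x, farPoints x A = {q x}) : farRelation A C q hat ⊆ C ×ˢ C := by
  rintro ⟨x, w⟩ ⟨hx, t, ht, z, hz, hw, -⟩
  refine ⟨hx, ?_⟩
  simp only at hw ⊢
  rw [hw]
  exact hC.add_smul_sub_mem (hhat _ (farthest_mem hq x).1) hz ht

theorem center_mem_farRelation (hhat : ∀ a ∈ A, hat a ∈ C) (hq : ∀ x, farPoints x A = {q x})
    {x : X} (hx : x ∈ C) : (x, hat (q x)) ∈ farRelation A C q hat :=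
  ⟨hx, 0, by simp, _, hhat _ (farthest_mem hq x).1, by simp, by simp⟩

theorem starConvex_farRelation (x : X) :
    StarConvex ℝ (hat (q x)) {w | (x, w) ∈ farRelation A C q hat} := by
  rintro w ⟨hx, t, ht, z, hz, hw, hcond⟩ a b ha hb hab
  refine ⟨hx, b * t, ⟨mul_nonneg hb ht.1, mul_le_one₀ (by linarith) ht.1 ht.2⟩, z, hz, ?_, ?_⟩
  · simp only at hw ⊢
    rw [hw, ← sub_eq_iff_eq_add.2 hab.symm]
    module
  · rw [mul_assoc]
    exact mul_nonpos_of_nonneg_of_nonpos hb hcond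

theorem fixed_notMem_farRelation (hbd : Bornology.IsBounded A) (hq : ∀ x, farPoints x A = {q x})
    (hpos : ∀ x, 0 < farDist x A) (hCle : ∀ x, ∀ z ∈ C, ‖x - z‖ ≤ farDist x A)
    (hhatq : ∀ a ∈ A, q (hat a) ≠ a) (x : X) : (x, x) ∉ farRelation A C q hat := by
  rintro ⟨-, t, ⟨ht0, ht1⟩, z, hz, hw, hcond⟩
  simp only at hw hcond
  obtain ⟨hqA, hqD⟩ := farthest_mem hq x
  rcases ht0.eq_or_lt with rfl | htpos
  · rw [zero_smul, add_zero] at hw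
    exact hhatq _ hqA (congrArg q hw.symm)
  have h2D : 2 * farDist x A ≤ ‖(x - q x) + (x - z)‖ := by
    linarith [nonpos_of_mul_nonpos_right hcond htpos]
  set y := hat (q x) with hy
  have hseg : ∀ a, (1 - t) • (x - a) + t • (x - z) = (1 - t) • (y - a) := by
    intro a
    have : (1 - t) • (x - a) + t • (x - z) = x - (1 - t) • a - t • z := by module
    rw [this]
    nth_rewrite 1 [hw]
    module
  have hlow := mul_le_norm_smul_add_smul hqD.le (hCle x z hz) h2D (sub_nonneg.2 ht1) ht0
  have hnorm : ∀ a, ‖(1 - t) • (y - a)‖ = (1 - t) * ‖y - a‖ := fun a => by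
    rw [norm_smul, Real.norm_of_nonneg (sub_nonneg.2 ht1)]
  rw [hseg, hnorm, sub_add_cancel, one_mul] at hlow
  have hupp : (1 - t) * ‖y - q y‖ ≤ farDist x A := by
    rw [← hnorm, ← hseg]
    refine (norm_add_le _ _).trans ?_
    rw [norm_smul, norm_smul, Real.norm_of_nonneg (sub_nonneg.2 ht1), Real.norm_of_nonneg ht0]
    have h1 := mul_le_mul_of_nonneg_left (norm_sub_le_farDist hbd x (farthest_mem hq y).1)
      (sub_nonneg.2 ht1)
    have h2 := mul_le_mul_of_nonneg_left (hCle x z hz) ht0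
    linarith
  have ht : 0 < 1 - t := by
    refine (sub_nonneg.2 ht1).lt_of_ne fun h => ?_
    rw [← h, zero_mul] at hlow
    exact (hpos x).not_ge hlow
  rw [(farthest_mem hq y).2] at hupp
  exact hhatq _ hqA
    (eq_farthest_of_farDist_le hbd hq hqA (le_of_mul_le_mul_left (hupp.trans hlow) ht)).symm

theorem isClosed_farRelation (hbd : Bornology.IsBounded A) (hne : A.Nonempty)
    (hq : ∀ x, farPoints x A = {q x}) (hM : MCompact A) (hC : IsCompact C) (hconv : Convex ℝ C)
    (hBC : B ⊆ C) (hAB : derivedSet A ⊆ B) (hCle : ∀ x, ∀ z ∈ C, ‖x - z‖ ≤ farDist x A)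
    {δ : ℝ} (hδ : 0 < δ)
    (hhat : ∀ a ∈ A, dist a (hat a) = Metric.infDist a B ∨ δ ≤ Metric.infDist a B) :
    IsClosed (farRelation A C q hat) := by
  refine IsSeqClosed.isClosed fun p p₀ hp hlim => ?_
  obtain ⟨x₀, w₀⟩ := p₀
  choose hpC t ht z hz hw hcond using hp
  obtain ⟨⟨t₀, z₀⟩, ⟨ht₀, hz₀⟩, φ, hφ, hφlim⟩ := (isCompact_Icc.prod hC).tendsto_subseq
    fun n => (⟨ht n, hz n⟩ : (t n, z n) ∈ Set.Icc (0 : ℝ) 1 ×ˢ C)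
  simp only at ht₀ hz₀
  have hx := ((continuous_fst.tendsto _).comp hlim).comp hφ.tendsto_atTop
  obtain ⟨ψ, hψ, hcase⟩ := exists_subseq_farthest hbd hne hq hM hx
  have hψ' := hψ.tendsto_atTop
  replace hx := hx.comp hψ'
  have hwlim := (((continuous_snd.tendsto _).comp hlim).comp hφ.tendsto_atTop).comp hψ'
  have htlim := ((continuous_fst.tendsto _).comp hφlim).comp hψ'
  have hzlim := ((continuous_snd.tendsto _).comp hφlim).comp hψ'
  have hD := ((lipschitzWith_farDist hbd hne).continuous.tendsto x₀).comp hx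
  have hx₀ : x₀ ∈ C := hC.isClosed.mem_of_tendsto hx (Eventually.of_forall fun n => hpC _)
  have hlimit : ∀ a : X, Tendsto (fun n => q (p (φ (ψ n))).1) atTop (𝓝 a) →
      t₀ * (2 * farDist x₀ A - ‖(x₀ - a) + (x₀ - z₀)‖) ≤ 0 := fun a ha =>
    le_of_tendsto (htlim.mul ((hD.const_mul 2).sub ((hx.sub ha).add (hx.sub hzlim)).norm))
      (Eventually.of_forall fun n => hcond _)
  have hlimit' : ∀ b : X, Tendsto (fun n => hat (q (p (φ (ψ n))).1)) atTop (𝓝 b) →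
      w₀ = b + t₀ • (z₀ - b) := fun b hb =>
    tendsto_nhds_unique hwlim
      ((hb.add (htlim.smul (hzlim.sub hb))).congr fun n => (hw (φ (ψ n))).symm)
  rcases hcase with hcase | ⟨b, hb, hbD, hblim⟩
  · have hconst : ∀ n, q (p (φ (ψ n))).1 = q x₀ := hcase
    refine ⟨hx₀, t₀, ht₀, z₀, hz₀, hlimit' _ ?_, hlimit _ ?_⟩ <;>
      simp only [hconst, tendsto_const_nhds]
  simp only at hbD
  have hblim' : Tendsto (fun n => q (p (φ (ψ n))).1) atTop (𝓝 b) := hblim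
  have hinf : Tendsto (fun n => Metric.infDist (q (p (φ (ψ n))).1) B) atTop (𝓝 0) := by
    rw [← Metric.infDist_zero_of_mem (hAB hb)]
    exact ((Metric.continuous_infDist_pt B).tendsto b).comp hblim'
  have hdist : Tendsto (fun n => dist (q (p (φ (ψ n))).1) (hat (q (p (φ (ψ n))).1)))
      atTop (𝓝 0) := by
    refine hinf.congr' ?_
    filter_upwards [hinf.eventually (gt_mem_nhds hδ)] with n hn
    exact ((hhat _ (farthest_mem hq _).1).resolve_right hn.not_ge).symm
  have hw₀ := hlimit' b ((tendsto_iff_of_dist hdist).1 hblim')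
  have hbcond := hlimit b hblim'
  have hw₀C : w₀ ∈ C := by
    rw [hw₀]
    exact hconv.add_smul_sub_mem (hBC (hAB hb)) hz₀ ht₀
  have h2D : 2 * farDist x₀ A ≤ ‖(x₀ - b) + (x₀ - w₀)‖ := by
    rcases ht₀.1.eq_or_lt with h0 | h0
    · rw [hw₀, ← h0, zero_smul, add_zero, ← two_smul ℝ, norm_smul, hbD]
      simp
    · have := mul_le_norm_smul_add_smul hbD.le (hCle x₀ z₀ hz₀)
        (by linarith [nonpos_of_mul_nonpos_right hbcond h0])
        (show 0 ≤ 2 - t₀ by linarith [ht₀.2]) ht₀.1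
      rw [sub_add_cancel] at this
      convert this using 2
      rw [hw₀]
      module
  refine ⟨hx₀, 1, by simp, w₀, hw₀C, by simp, ?_⟩
  have hbcl := closure_subset_closedBall_farDist hbd (x₀ + (x₀ - w₀))
    (mem_closure_iff_clusterPt.2 (AccPt.clusterPt hb))
  rw [mem_closedBall_iff_norm', show x₀ + (x₀ - w₀) - b = (x₀ - b) + (x₀ - w₀) by abel] at hbcl
  have := farDist_reflection_le hbd hq (hCle x₀ w₀ hw₀C) (h2D.trans hbcl)
  simp only
  linarith

end FarRelation

theorem stmt_5 {X : Type*} [NormedAddCommGroup X] [NormedSpace ℝ X] [CompleteSpace X]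
    (A : Set X) (hne : A.Nonempty) (hbd : Bornology.IsBounded A)
    (hur : UniquelyRemotal A) (hM : MCompact A)
    (hc : IsCompact (derivedSet A)) : ∃ a : X, A = {a} := by
  choose q hq using hur
  obtain ⟨a₁, ha₁⟩ := hne
  by_contra! hA
  obtain ⟨a₂, ha₂, ha₁₂⟩ : ∃ a₂ ∈ A, a₂ ≠ a₁ := by
    by_contra! h
    exact hA a₁ (Set.eq_singleton_iff_unique_mem.2 ⟨ha₁, h⟩)
  set δ := dist a₂ a₁ / 2 with hδ
  have hδpos : 0 < δ := half_pos (dist_pos.2 ha₁₂)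
  have hδle : ∀ x, δ ≤ farDist x A := fun x => by
    linarith [dist_le_two_mul_farDist hbd ha₂ ha₁ x]
  have hqne : ∀ x, q x ≠ x := fun x h => by
    have := (farthest_mem hq x).2
    rw [h, sub_self, norm_zero] at this
    linarith [hδle x]
  set B : Set X := insert a₁ (insert (q a₁) (derivedSet A)) with hB
  have hBcomp : IsCompact B := (hc.insert _).insert _
  have hBne : B.Nonempty := ⟨a₁, Set.mem_insert _ _⟩
  have hBcl : B ⊆ closure A := by
    refine Set.insert_subset (subset_closure ha₁)
      (Set.insert_subset (subset_closure (farthest_mem hq a₁).1) fun b hb => ?_)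
    exact mem_closure_iff_clusterPt.2 (AccPt.clusterPt hb)
  set C : Set X := closure (convexHull ℝ B) with hCdef
  have hBC : B ⊆ C := (subset_convexHull ℝ B).trans subset_closure
  have hCcomp : IsCompact C :=
    hBcomp.totallyBounded.convexHull.closure.isCompact_of_isClosed isClosed_closure
  have hCconv : Convex ℝ C := (convex_convexHull ℝ B).closure
  have hCle : ∀ x, ∀ z ∈ C, ‖x - z‖ ≤ farDist x A := fun x z hz =>
    mem_closedBall_iff_norm'.1 (closure_minimal (convexHull_min
      (hBcl.trans (closure_subset_closedBall_farDist hbd x)) (convex_closedBall _ _))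
      Metric.isClosed_closedBall hz)
  have hhat : ∀ a ∈ A, ∃ y ∈ C, q y ≠ a ∧
      (dist a y = Metric.infDist a B ∨ δ ≤ Metric.infDist a B) := by
    intro a ha
    by_cases hlt : δ ≤ Metric.infDist a B
    · by_cases h : q a₁ = a
      · exact ⟨q a₁, hBC (by simp [hB]), fun h' => hqne _ (h'.trans h.symm), Or.inr hlt⟩
      · exact ⟨a₁, hBC (by simp [hB]), h, Or.inr hlt⟩
    · obtain ⟨y, hy, hdist⟩ := hBcomp.exists_infDist_eq_dist hBne a
      refine ⟨y, hBC hy, fun h => hlt ?_, Or.inl hdist.symm⟩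
      rw [hdist, dist_comm, dist_eq_norm, ← h, (farthest_mem hq y).2]
      exact hδle y
  choose! hat hhatC hhatq hhatd using hhat
  obtain ⟨x, hx⟩ := exists_fixed_of_starConvex hCcomp hCconv (hBne.mono hBC)
    (isClosed_farRelation hbd ⟨a₁, ha₁⟩ hq hM hCcomp hCconv hBC
      ((Set.subset_insert _ _).trans (Set.subset_insert _ _)) hCle hδpos hhatd)
    (farRelation_subset hCconv hhatC hq) (fun x hx => center_mem_farRelation hhatC hq hx)
    fun x _ => starConvex_farRelation x
  exact fixed_notMem_farRelation hbd hq (fun x => hδpos.trans_le (hδle x)) hCle hhatq x hx
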